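/- Fix an initial state x ∈ ℝ^n, weights w₁, w₂ ≥ 0, and a horizon N. Then sup{ w₁ μ − w₂ ε : μ ≥ 0, ε ≥ 0, and there exists a sequence ũ(0), …, ũ(N−1) ∈ ℝ^m with ‖ũ(i)‖∞ ≤ 1 such that for every disturbance sequence d(0), …, d(N−1) with ‖d(i)‖∞ ≤ μ, the open-loop trajectory x(0) = x, x(k+1) = A_k x(k) + B_k (ε ũ(k)) + d(k) satisfies G_k x(k) ≤ H_k for all k = 0, …, N } = sup{ w₁ μ − w₂ ε : μ ≥ 0, ε ≥ 0, and there exist ũ(0), …, ũ(N−1) with ‖ũ(i)‖∞ ≤ 1 and a nonnegative matrix P ∈ ℝ^{(N+1)q × 2n(N+1)} with P A_b = μ E^{ol} and P B_b ≤ F^{ol}(x, ũ, ε) }. -/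

import Mathlib

open Matrix Finset

noncomputable section

/-- Ordered product `M (k-1) * M (k-2) * ⋯ * M i` (empty product = identity when `k ≤ i`). -/
def mprod {n : ℕ} (M : ℕ → Matrix (Fin n) (Fin n) ℝ) (i k : ℕ) :
    Matrix (Fin n) (Fin n) ℝ :=
  (((List.range' i (k - i)).reverse).map M).prod

def Abar {n m : ℕ} (A : ℕ → Matrix (Fin n) (Fin n) ℝ) (B : ℕ → Matrix (Fin n) (Fin m) ℝ)
    (α₁ : Matrix (Fin m) (Fin n) ℝ) (j : ℕ) : Matrix (Fin n) (Fin n) ℝ :=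
  A j + B j * α₁

def trajCL {n m : ℕ} (A : ℕ → Matrix (Fin n) (Fin n) ℝ) (B : ℕ → Matrix (Fin n) (Fin m) ℝ)
    (α₁ : Matrix (Fin m) (Fin n) ℝ) (α₂ : Fin m → ℝ) (d : ℕ → Fin n → ℝ)
    (x0 : Fin n → ℝ) : ℕ → Fin n → ℝ
  | 0 => x0
  | k + 1 =>
      (A k).mulVec (trajCL A B α₁ α₂ d x0 k)
        + (B k).mulVec (α₁.mulVec (trajCL A B α₁ α₂ d x0 k) + α₂) + d k

def Eblk {n : ℕ} (N : ℕ) (M : ℕ → Matrix (Fin n) (Fin n) ℝ) (k : ℕ) :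
    Matrix (Fin n) (Fin (N + 1) × Fin n) ℝ :=
  Matrix.of fun r jc =>
    if 1 ≤ (jc.1 : ℕ) ∧ (jc.1 : ℕ) ≤ k then mprod M (jc.1 : ℕ) k r jc.2 else 0

def Fblk {n m : ℕ} (A : ℕ → Matrix (Fin n) (Fin n) ℝ) (B : ℕ → Matrix (Fin n) (Fin m) ℝ)
    (α₁ : Matrix (Fin m) (Fin n) ℝ) (α₂ : Fin m → ℝ) (x : Fin n → ℝ) (k : ℕ) : Fin n → ℝ :=
  (mprod (Abar A B α₁) 0 k).mulVec x
    + ∑ i ∈ Finset.range k, (mprod (Abar A B α₁) (i + 1) k * B i).mulVec α₂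

def Ex {n m q : ℕ} (N : ℕ) (A : ℕ → Matrix (Fin n) (Fin n) ℝ)
    (B : ℕ → Matrix (Fin n) (Fin m) ℝ) (G : ℕ → Matrix (Fin q) (Fin n) ℝ)
    (α₁ : Matrix (Fin m) (Fin n) ℝ) :
    Matrix (Fin (N + 1) × Fin q) (Fin (N + 1) × Fin n) ℝ :=
  Matrix.of fun kr jc => (G (kr.1 : ℕ) * Eblk N (Abar A B α₁) (kr.1 : ℕ)) kr.2 jc

def Fx {n m q : ℕ} (N : ℕ) (A : ℕ → Matrix (Fin n) (Fin n) ℝ)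
    (B : ℕ → Matrix (Fin n) (Fin m) ℝ) (G : ℕ → Matrix (Fin q) (Fin n) ℝ)
    (H : ℕ → Fin q → ℝ) (α₁ : Matrix (Fin m) (Fin n) ℝ) (α₂ : Fin m → ℝ)
    (x : Fin n → ℝ) : Fin (N + 1) × Fin q → ℝ :=
  fun kr => H (kr.1 : ℕ) kr.2 - (G (kr.1 : ℕ)).mulVec (Fblk A B α₁ α₂ x (kr.1 : ℕ)) kr.2

def Au (m : ℕ) : Matrix (Fin m ⊕ Fin m) (Fin m) ℝ := Matrix.fromRows 1 (-1)

def Sk {n m : ℕ} (A : ℕ → Matrix (Fin n) (Fin n) ℝ) (B : ℕ → Matrix (Fin n) (Fin m) ℝ)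
    (α₁ : Matrix (Fin m) (Fin n) ℝ) (α₂ : Fin m → ℝ) (x : Fin n → ℝ) (k : ℕ) : Fin m → ℝ :=
  α₁.mulVec (Fblk A B α₁ α₂ x k) + α₂

def Ecl {n m q : ℕ} (N : ℕ) (A : ℕ → Matrix (Fin n) (Fin n) ℝ)
    (B : ℕ → Matrix (Fin n) (Fin m) ℝ) (G : ℕ → Matrix (Fin q) (Fin n) ℝ)
    (α₁ : Matrix (Fin m) (Fin n) ℝ) :
    Matrix ((Fin (N + 1) × Fin q) ⊕ (Fin N × (Fin m ⊕ Fin m))) (Fin (N + 1) × Fin n) ℝ :=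
  Matrix.fromRows (Ex N A B G α₁)
    (Matrix.of fun kr jc => (Au m * α₁ * Eblk N (Abar A B α₁) (kr.1 : ℕ)) kr.2 jc)

def Fcl {n m q : ℕ} (N : ℕ) (A : ℕ → Matrix (Fin n) (Fin n) ℝ)
    (B : ℕ → Matrix (Fin n) (Fin m) ℝ) (G : ℕ → Matrix (Fin q) (Fin n) ℝ)
    (H : ℕ → Fin q → ℝ) (α₁ : Matrix (Fin m) (Fin n) ℝ) (α₂ : Fin m → ℝ)
    (x : Fin n → ℝ) (ε : ℝ) : (Fin (N + 1) × Fin q) ⊕ (Fin N × (Fin m ⊕ Fin m)) → ℝ :=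
  Sum.elim (Fx N A B G H α₁ α₂ x)
    (fun kr => ε - (Au m).mulVec (Sk A B α₁ α₂ x (kr.1 : ℕ)) kr.2)

def AbM (N n : ℕ) :
    Matrix ((Fin (N + 1) × Fin n) ⊕ (Fin (N + 1) × Fin n)) (Fin (N + 1) × Fin n) ℝ :=
  Matrix.fromRows 1 (-1)

def BbV (N n : ℕ) : (Fin (N + 1) × Fin n) ⊕ (Fin (N + 1) × Fin n) → ℝ := fun _ => 1

def trajOL {n m : ℕ} (A : ℕ → Matrix (Fin n) (Fin n) ℝ) (B : ℕ → Matrix (Fin n) (Fin m) ℝ)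
    (u : ℕ → Fin m → ℝ) (d : ℕ → Fin n → ℝ) (x0 : Fin n → ℝ) : ℕ → Fin n → ℝ
  | 0 => x0
  | k + 1 => (A k).mulVec (trajOL A B u d x0 k) + (B k).mulVec (u k) + d k

def Eol {n q : ℕ} (N : ℕ) (A : ℕ → Matrix (Fin n) (Fin n) ℝ)
    (G : ℕ → Matrix (Fin q) (Fin n) ℝ) :
    Matrix (Fin (N + 1) × Fin q) (Fin (N + 1) × Fin n) ℝ :=
  Matrix.of fun kr jc => (G (kr.1 : ℕ) * Eblk N A (kr.1 : ℕ)) kr.2 jc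

def Fol {n m q : ℕ} (N : ℕ) (A : ℕ → Matrix (Fin n) (Fin n) ℝ)
    (B : ℕ → Matrix (Fin n) (Fin m) ℝ) (G : ℕ → Matrix (Fin q) (Fin n) ℝ)
    (H : ℕ → Fin q → ℝ) (x : Fin n → ℝ) (ut : ℕ → Fin m → ℝ) (ε : ℝ) :
    Fin (N + 1) × Fin q → ℝ :=
  fun kr => H (kr.1 : ℕ) kr.2
    - (G (kr.1 : ℕ)).mulVec ((mprod A 0 (kr.1 : ℕ)).mulVec x) kr.2
    - ε * (G (kr.1 : ℕ)).mulVec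
        (∑ i ∈ Finset.range (kr.1 : ℕ), (mprod A (i + 1) (kr.1 : ℕ) * B i).mulVec (ut i)) kr.2

theorem mprod_self' {n : ℕ} (M : ℕ → Matrix (Fin n) (Fin n) ℝ) (k : ℕ) : mprod M k k = 1 := by
  simp [mprod]

theorem mprod_succ' {n : ℕ} (M : ℕ → Matrix (Fin n) (Fin n) ℝ) {i k : ℕ} (h : i ≤ k) :
    mprod M i (k + 1) = M k * mprod M i k := by
  unfold mprod
  rw [Nat.succ_sub h, List.range'_concat]
  simp [Nat.add_sub_cancel' h]

theorem traj_formula {n m : ℕ} (A : ℕ → Matrix (Fin n) (Fin n) ℝ)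
    (B : ℕ → Matrix (Fin n) (Fin m) ℝ)
    (u : ℕ → Fin m → ℝ) (d : ℕ → Fin n → ℝ) (x : Fin n → ℝ) (k : ℕ) :
    trajOL A B u d x k = (mprod A 0 k).mulVec x
      + ∑ i ∈ Finset.range k, (mprod A (i + 1) k * B i).mulVec (u i)
      + ∑ i ∈ Finset.range k, (mprod A (i + 1) k).mulVec (d i) := by
  induction k with
  | zero => simp [trajOL, mprod_self']
  | succ k ih =>
    have h1 : ∀ i ∈ Finset.range k, (mprod A (i + 1) (k + 1) * B i).mulVec (u i)
        = (A k).mulVec ((mprod A (i + 1) k * B i).mulVec (u i)) := by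
      intro i hi
      rw [mprod_succ' A (by simpa using hi), Matrix.mulVec_mulVec, Matrix.mul_assoc]
    have h2 : ∀ i ∈ Finset.range k, (mprod A (i + 1) (k + 1)).mulVec (d i)
        = (A k).mulVec ((mprod A (i + 1) k).mulVec (d i)) := by
      intro i hi
      rw [mprod_succ' A (by simpa using hi), Matrix.mulVec_mulVec]
    rw [trajOL, ih, Finset.sum_range_succ, Finset.sum_range_succ, Finset.sum_congr rfl h1,
      Finset.sum_congr rfl h2, mprod_self', mprod_succ' A (Nat.zero_le k), Matrix.mulVec_add,
      Matrix.mulVec_add, Matrix.mulVec_mulVec, Matrix.mulVec_sum, Matrix.mulVec_sum]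
    simp only [Matrix.one_mul, Matrix.one_mulVec]
    abel

theorem Eblk_mulVec {n N : ℕ} (A : ℕ → Matrix (Fin n) (Fin n) ℝ) (d : ℕ → Fin n → ℝ)
    {k : ℕ} (hk : k ≤ N) :
    (Eblk N A k).mulVec (fun jc => d ((jc.1 : ℕ) - 1) jc.2)
      = ∑ i ∈ Finset.range k, (mprod A (i + 1) k).mulVec (d i) := by
  funext r
  have h : ∀ j : Fin N, (∑ c, Eblk N A k r (j.succ, c) * d ((j.succ : Fin (N + 1)) - 1 : ℕ) c)
      = (fun i : ℕ => if i < k then (mprod A (i + 1) k).mulVec (d i) r else 0) j := by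
    intro j
    by_cases hj : (j : ℕ) < k
    · simp [Eblk, Matrix.mulVec, dotProduct, hj, Nat.succ_le_iff.mpr hj]
    · have : ¬ ((j : ℕ) + 1 ≤ k) := by omega
      simp [Eblk, hj, this]
  rw [Finset.sum_apply]
  simp only [Matrix.mulVec, dotProduct]
  rw [Fintype.sum_prod_type, Fin.sum_univ_succ, Finset.sum_congr rfl (fun j _ => h j),
    Fin.sum_univ_eq_sum_range
      (fun i : ℕ => if i < k then (mprod A (i + 1) k).mulVec (d i) r else 0) N,
    ← Finset.sum_filter]
  have : (Finset.range N).filter (fun i => i < k) = Finset.range k := by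
    ext i; simp; omega
  rw [this]
  simp [Eblk, Matrix.mulVec, dotProduct]

theorem row_formula {n m q N : ℕ}
    (A : ℕ → Matrix (Fin n) (Fin n) ℝ) (B : ℕ → Matrix (Fin n) (Fin m) ℝ)
    (G : ℕ → Matrix (Fin q) (Fin n) ℝ) (H : ℕ → Fin q → ℝ)
    (x : Fin n → ℝ) (ut : ℕ → Fin m → ℝ) (ε : ℝ) (d : ℕ → Fin n → ℝ)
    (k : Fin (N + 1)) (r : Fin q) :
    H k r - (G k).mulVec (trajOL A B (fun i => ε • ut i) d x k) r
      = Fol N A B G H x ut ε (k, r)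
        - ∑ jc : Fin (N + 1) × Fin n, Eol N A G (k, r) jc * d ((jc.1 : ℕ) - 1) jc.2 := by
  have hE : ∑ jc : Fin (N + 1) × Fin n, Eol N A G (k, r) jc * d ((jc.1 : ℕ) - 1) jc.2
      = (G k).mulVec (∑ i ∈ Finset.range k, (mprod A (i + 1) k).mulVec (d i)) r := by
    rw [← Eblk_mulVec (N := N) A d (by omega), Matrix.mulVec_mulVec]
    rfl
  rw [hE, traj_formula]
  simp only [Matrix.mulVec_smul, ← Finset.smul_sum, Matrix.mulVec_add, Pi.add_apply,
    Pi.smul_apply, smul_eq_mul, Fol]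
  ring

theorem robust_iff {n m q N : ℕ}
    (A : ℕ → Matrix (Fin n) (Fin n) ℝ) (B : ℕ → Matrix (Fin n) (Fin m) ℝ)
    (G : ℕ → Matrix (Fin q) (Fin n) ℝ) (H : ℕ → Fin q → ℝ)
    (x : Fin n → ℝ) (ut : ℕ → Fin m → ℝ) (ε μ : ℝ) (hμ : 0 ≤ μ) :
    (∀ d : ℕ → Fin n → ℝ, (∀ i, i < N → ‖d i‖ ≤ μ) →
          ∀ k, k ≤ N → (G k).mulVec (trajOL A B (fun i => ε • ut i) d x k) ≤ H k) ↔
    ∀ kr, ∑ jc, |μ * Eol N A G kr jc| ≤ Fol N A B G H x ut ε kr := by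
  constructor
  · rintro h ⟨k, r⟩
    let d : ℕ → Fin n → ℝ := fun i c =>
      if hi : i < N then μ * SignType.sign (Eol N A G (k, r) (⟨i + 1, by omega⟩, c)) else 0
    have hd : ∀ i, i < N → ‖d i‖ ≤ μ := by
      intro i hi
      rw [pi_norm_le_iff_of_nonneg hμ]
      intro c
      simp only [d, hi, dif_pos, Real.norm_eq_abs, abs_mul, abs_of_nonneg hμ]
      refine mul_le_of_le_one_right hμ ?_
      rcases SignType.sign (Eol N A G (k, r) (⟨i + 1, by omega⟩, c)) <;> simp
    have h1 := h d hd k (by omega) r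
    have h2 := row_formula A B G H x ut ε d k r
    have h3 : ∑ jc : Fin (N + 1) × Fin n, Eol N A G (k, r) jc * d ((jc.1 : ℕ) - 1) jc.2
        = ∑ jc, |μ * Eol N A G (k, r) jc| := by
      refine Finset.sum_congr rfl ?_
      rintro ⟨j, c⟩ -
      refine Fin.cases ?_ (fun j => ?_) j
      · have : Eol N A G (k, r) (0, c) = 0 := by
          simp [Eol, Eblk, Matrix.mul_apply]
        simp [this]
      · have hj : ((j.succ : Fin (N + 1)) : ℕ) - 1 = j := by simp
        have hjj : (⟨(j : ℕ) + 1, by omega⟩ : Fin (N + 1)) = j.succ := rfl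
        simp only [hj, d, j.2, dif_pos, hjj]
        rw [abs_mul, abs_of_nonneg hμ, ← self_mul_sign]
        ring
    linarith
  · intro h d hd k hk r
    have h2 := row_formula A B G H x ut ε d (⟨k, by omega⟩ : Fin (N + 1)) r
    have h1 := h (⟨k, by omega⟩, r)
    have h3 : ∑ jc : Fin (N + 1) × Fin n,
          Eol N A G (⟨k, by omega⟩, r) jc * d ((jc.1 : ℕ) - 1) jc.2
        ≤ ∑ jc, |μ * Eol N A G (⟨k, by omega⟩, r) jc| := by
      refine Finset.sum_le_sum ?_
      rintro ⟨j, c⟩ -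
      refine Fin.cases ?_ (fun j => ?_) j
      · have : Eol N A G (⟨k, by omega⟩, r) (0, c) = 0 := by
          simp [Eol, Eblk, Matrix.mul_apply]
        simp [this]
      · have hj : ((j.succ : Fin (N + 1)) : ℕ) - 1 = j := by simp
        simp only [hj]
        refine (le_abs_self _).trans ?_
        rw [abs_mul, abs_mul, abs_of_nonneg hμ, mul_comm]
        have := (norm_le_pi_norm (d j) c).trans (hd j j.2)
        rw [Real.norm_eq_abs] at this
        gcongr
    simp only at h2
    linarith

theorem cert_iff {ι κ : Type*} [Fintype κ] [DecidableEq κ] (E : Matrix ι κ ℝ) (F : ι → ℝ) :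
    (∃ P : Matrix ι (κ ⊕ κ) ℝ, (∀ i j, 0 ≤ P i j) ∧
      P * (Matrix.fromRows 1 (-1) : Matrix (κ ⊕ κ) κ ℝ) = E ∧ P.mulVec (fun _ => 1) ≤ F) ↔
    ∀ i, ∑ j, |E i j| ≤ F i := by
  have key : ∀ (P : Matrix ι (κ ⊕ κ) ℝ) (i : ι) (j : κ),
      (P * (Matrix.fromRows 1 (-1) : Matrix (κ ⊕ κ) κ ℝ)) i j = P i (.inl j) - P i (.inr j) := by
    intro P i j
    simp [Matrix.mul_apply, Fintype.sum_sum_type, Matrix.one_apply, sub_eq_add_neg]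
  constructor
  · rintro ⟨P, hP, hE, hF⟩ i
    refine le_trans ?_ (hF i)
    simp only [Matrix.mulVec, dotProduct, mul_one, Fintype.sum_sum_type]
    rw [← Finset.sum_add_distrib]
    refine Finset.sum_le_sum fun j _ => ?_
    rw [← hE, key, abs_le]
    constructor <;> linarith [hP i (.inl j), hP i (.inr j)]
  · intro h
    refine ⟨Matrix.of fun i => Sum.elim (fun j => max (E i j) 0) (fun j => max (-E i j) 0),
      ?_, ?_, ?_⟩
    · rintro i (j | j) <;> simp
    · ext i j
      rw [key]
      rcases le_total 0 (E i j) with h0 | h0 <;> simp [h0]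
    · intro i
      refine le_trans (le_of_eq ?_) (h i)
      simp only [Matrix.mulVec, dotProduct, mul_one, Fintype.sum_sum_type]
      rw [← Finset.sum_add_distrib]
      refine Finset.sum_congr rfl fun j _ => ?_
      rcases le_total 0 (E i j) with h0 | h0 <;> simp [h0, abs_of_nonneg, abs_of_nonpos]

/-- Pareto trade-off between resilience and effort for the open-loop LTV system:
the supremum of `w₁ μ - w₂ ε` over the robust formulation equals the supremum over the
Farkas-certified formulation. -/
theorem pareto_openLoop {n m q N : ℕ}
    (A : ℕ → Matrix (Fin n) (Fin n) ℝ) (B : ℕ → Matrix (Fin n) (Fin m) ℝ)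
    (G : ℕ → Matrix (Fin q) (Fin n) ℝ) (H : ℕ → Fin q → ℝ)
    (x : Fin n → ℝ) (w₁ w₂ : ℝ) (hw₁ : 0 ≤ w₁) (hw₂ : 0 ≤ w₂) :
    sSup {v : ℝ | ∃ (μ ε : ℝ) (ut : ℕ → Fin m → ℝ),
        0 ≤ μ ∧ 0 ≤ ε ∧ v = w₁ * μ - w₂ * ε ∧
        (∀ i, i < N → ‖ut i‖ ≤ 1) ∧
        ∀ d : ℕ → Fin n → ℝ, (∀ i, i < N → ‖d i‖ ≤ μ) →
          ∀ k, k ≤ N → (G k).mulVec (trajOL A B (fun i => ε • ut i) d x k) ≤ H k} =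
    sSup {v : ℝ | ∃ (μ ε : ℝ) (ut : ℕ → Fin m → ℝ)
        (P : Matrix (Fin (N + 1) × Fin q)
          ((Fin (N + 1) × Fin n) ⊕ (Fin (N + 1) × Fin n)) ℝ),
        0 ≤ μ ∧ 0 ≤ ε ∧ v = w₁ * μ - w₂ * ε ∧
        (∀ i, i < N → ‖ut i‖ ≤ 1) ∧
        (∀ i j, 0 ≤ P i j) ∧
        P * AbM N n = μ • Eol N A G ∧
        P.mulVec (BbV N n) ≤ Fol N A B G H x ut ε} := by
  congr 1
  ext v
  simp only [Set.mem_setOf_eq]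
  refine exists_congr fun μ => exists_congr fun ε => exists_congr fun ut => ?_
  have hc := cert_iff (μ • Eol N A G) (Fol N A B G H x ut ε)
  constructor
  · rintro ⟨hμ, hε, hv, hu, hd⟩
    obtain ⟨P, h1, h2, h3⟩ := hc.2 ((robust_iff A B G H x ut ε μ hμ).1 hd)
    exact ⟨P, hμ, hε, hv, hu, h1, h2, h3⟩
  · rintro ⟨P, hμ, hε, hv, hu, h1, h2, h3⟩
    exact ⟨hμ, hε, hv, hu, (robust_iff A B G H x ut ε μ hμ).2 (hc.1 ⟨P, h1, h2, h3⟩)⟩
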